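/- arXiv:2109.12233 — 2 statements merged into one kernel-verified Lean document; each statement's English description precedes it below -/
import Mathlib

section
/- Let k be a finite field of odd characteristic. Then the Grothendieck-Witt group of k (the group completion of the monoid of isometry classes of nondegenerate symmetric bilinear forms over k under orthogonal sum) is isomorphic as a ring to Z[e]/(e², 2e), where e = [r] − [1] for r a non-square in k×. -/
open Polynomial Matrix Kronecker

/-- The ring `ℤ[e]/(e², 2e)`. -/
noncomputable def RepsInt : Ideal (Polynomial ℤ) :=
  Ideal.span ({X ^ 2, 2 * X} : Set (Polynomial ℤ))

abbrev GWTarget := Polynomial ℤ ⧸ RepsInt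

/-- The class of `e` in `ℤ[e]/(e², 2e)`. -/
noncomputable def ebar : GWTarget := Ideal.Quotient.mk RepsInt X

/-- Congruence (isometry of the associated bilinear forms) of square matrices of
possibly different (but then necessarily equal) sizes. -/
def MCongruent {k : Type*} [Field k] {n m : ℕ}
    (A : Matrix (Fin n) (Fin n) k) (B : Matrix (Fin m) (Fin m) k) : Prop :=
  ∃ e : Fin n ≃ Fin m, ∃ P : Matrix (Fin m) (Fin m) k,
    IsUnit P.det ∧ Matrix.reindex e e A = Pᵀ * B * P

/-- Orthogonal direct sum of forms: block sum of Gram matrices. -/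
def blockSum {k : Type*} [Field k] {n m : ℕ}
    (A : Matrix (Fin n) (Fin n) k) (B : Matrix (Fin m) (Fin m) k) :
    Matrix (Fin (n + m)) (Fin (n + m)) k :=
  Matrix.reindex finSumFinEquiv finSumFinEquiv (Matrix.fromBlocks A 0 0 B)

/-- Tensor product of forms: Kronecker product of Gram matrices. -/
def matKron {k : Type*} [Field k] {n m : ℕ}
    (A : Matrix (Fin n) (Fin n) k) (B : Matrix (Fin m) (Fin m) k) :
    Matrix (Fin (n * m)) (Fin (n * m)) k :=
  Matrix.reindex finProdFinEquiv finProdFinEquiv (A ⊗ₖ B)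

/-!
Let `k` be a field of characteristic not two with exactly two square classes, those of `1` and `r`,
in which `r = a² + b²`. Diagonalizing forms shows that the Grothendieck–Witt ring is generated by
`e = [r] - 1`. The scaling `r * r = r² * 1` gives `[r]² = 1`, and `P = !![a, b; -b, a]` satisfies
`Pᵀ * P = r • 1`, which gives `2[r] = 2`; together these say `e² = 2e = 0`. Conversely, the rank and
the discriminant modulo squares survive stable isometry, and they separate the elements
`n` and `n + e` (`n ∈ ℤ`) that make up `ℤ[e]/(e², 2e)`. Over a finite field of odd characteristic,
every element is a sum of two squares by counting.
-/

theorem ne_zero_of_not_isSquare {R : Type*} [MulZeroClass R] {a : R} (ha : ¬ IsSquare a) :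
    a ≠ 0 :=
  fun h => ha (h ▸ IsSquare.zero)

section Congruence

variable {k : Type*} [Field k] {n m l : ℕ}

theorem MCongruent.size_eq {A : Matrix (Fin n) (Fin n) k} {B : Matrix (Fin m) (Fin m) k}
    (h : MCongruent A B) : n = m := by
  obtain ⟨e, -⟩ := h
  exact Fin.equiv_iff_eq.mp ⟨e⟩

theorem MCongruent.isSquare_det_mul_det {A : Matrix (Fin n) (Fin n) k}
    {B : Matrix (Fin m) (Fin m) k} (h : MCongruent A B) : IsSquare (A.det * B.det) := by
  obtain ⟨e, P, -, h⟩ := h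
  refine ⟨P.det * B.det, ?_⟩
  rw [← det_reindex_self e A, h, det_mul, det_mul, det_transpose]
  ring

theorem mCongruent_of_eq_transpose_mul_mul {A B P : Matrix (Fin n) (Fin n) k} (hP : IsUnit P.det)
    (h : A = Pᵀ * B * P) : MCongruent A B :=
  ⟨Equiv.refl _, P, hP, by simpa using h⟩

theorem det_blockSum (A : Matrix (Fin n) (Fin n) k) (B : Matrix (Fin m) (Fin m) k) :
    (blockSum A B).det = A.det * B.det := by
  rw [blockSum, det_reindex_self, det_fromBlocks_zero₂₁]

theorem blockSum_diagonal (d : Fin n → k) (d' : Fin m → k) :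
    blockSum (diagonal d) (diagonal d') = diagonal (Fin.append d d') := by
  have happend : Sum.elim d d' ∘ finSumFinEquiv.symm = Fin.append d d' := by
    rw [Equiv.comp_symm_eq]
    ext (i | i) <;> simp
  rw [blockSum, fromBlocks_diagonal, reindex_apply, submatrix_diagonal_equiv, happend]

theorem matKron_singleton (a b : k) : matKron !![a] !![b] = !![a * b] := by
  ext i j
  fin_cases i; fin_cases j
  rfl

theorem MCongruent.size_eq_of_blockSum {A : Matrix (Fin n) (Fin n) k}
    {B : Matrix (Fin m) (Fin m) k} {D : Matrix (Fin l) (Fin l) k}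
    (h : MCongruent (blockSum A D) (blockSum B D)) : n = m :=
  Nat.add_right_cancel h.size_eq

theorem MCongruent.isSquare_det_mul_det_of_blockSum {A : Matrix (Fin n) (Fin n) k}
    {B : Matrix (Fin m) (Fin m) k} {D : Matrix (Fin l) (Fin l) k} (hD : IsUnit D.det)
    (h : MCongruent (blockSum A D) (blockSum B D)) : IsSquare (A.det * B.det) := by
  obtain ⟨t, ht⟩ := h.isSquare_det_mul_det
  rw [det_blockSum, det_blockSum] at ht
  have hD0 : D.det ≠ 0 := hD.ne_zero
  refine ⟨t / D.det, ?_⟩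
  field_simp
  linear_combination ht

theorem mCongruent_singleton_of_isSquare_mul {a b : k} (ha : a ≠ 0) (hb : b ≠ 0)
    (hab : IsSquare (a * b)) : MCongruent !![a] !![b] := by
  obtain ⟨t, ht⟩ := hab
  have ht0 : t ≠ 0 := left_ne_zero_of_mul (ht ▸ mul_ne_zero ha hb)
  have hscale : a = t / b * b * (t / b) := by
    field_simp
    linear_combination ht
  refine mCongruent_of_eq_transpose_mul_mul (P := !![t / b]) (by simp [ht0, hb]) ?_
  ext i j
  fin_cases i; fin_cases j
  simpa [Matrix.mul_apply] using hscale

theorem mCongruent_diagonal_sq_add_sq {a b : k} (h : a ^ 2 + b ^ 2 ≠ 0) :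
    MCongruent (diagonal ![a ^ 2 + b ^ 2, a ^ 2 + b ^ 2]) (diagonal ![1, 1]) := by
  refine mCongruent_of_eq_transpose_mul_mul (P := !![a, b; -b, a]) ?_ ?_
  · rw [det_fin_two_of]
    exact IsUnit.mk0 _ (by convert h using 1; ring)
  · ext i j
    fin_cases i <;> fin_cases j <;> simp [Matrix.mul_apply, Fin.sum_univ_two] <;> ring

theorem exists_diagonal_eq_transpose_mul_mul (h2 : (2 : k) ≠ 0) {A : Matrix (Fin n) (Fin n) k}
    (hA : A.IsSymm) :
    ∃ (d : Fin n → k) (P : Matrix (Fin n) (Fin n) k), IsUnit P.det ∧ diagonal d = Pᵀ * A * P := by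
  have : Invertible (2 : k) := invertibleOfNonzero h2
  obtain ⟨v', hv'⟩ := LinearMap.BilinForm.exists_orthogonal_basis (B := A.toBilin')
    (LinearMap.BilinForm.isSymm_iff.mp (isSymm_toBilin'_iff_isSymm.mpr hA))
  let v := v'.reindex (finCongr (Module.finrank_fin_fun k))
  have hv {i j : Fin n} (hij : i ≠ j) : A.toBilin' (v i) (v j) = 0 := by
    simp only [v, Module.Basis.reindex_apply]
    exact LinearMap.isOrthoᵢ_def.mp hv' _ _ ((Equiv.injective _).ne hij)
  let P := (Pi.basisFun k (Fin n)).toMatrix v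
  have hgram : LinearMap.BilinForm.toMatrix v A.toBilin' = Pᵀ * A * P := by
    rw [← LinearMap.BilinForm.toMatrix_mul_basis_toMatrix (Pi.basisFun k (Fin n)),
      LinearMap.BilinForm.toMatrix_basisFun, LinearMap.BilinForm.toMatrix'_toBilin']
  refine ⟨fun i => A.toBilin' (v i) (v i), P, ?_, ?_⟩
  · rw [← isUnit_iff_isUnit_det]
    exact IsUnit.of_mul_eq_one _ ((Pi.basisFun k (Fin n)).toMatrix_mul_toMatrix_flip v)
  · rw [← hgram]
    ext i j
    rw [LinearMap.BilinForm.toMatrix_apply]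
    obtain rfl | hij := eq_or_ne i j
    · exact diagonal_apply_eq _ _
    · rw [diagonal_apply_ne _ hij, hv hij]

theorem exists_mCongruent_diagonal (h2 : (2 : k) ≠ 0) {A : Matrix (Fin n) (Fin n) k}
    (hA : A.IsSymm) (hdet : IsUnit A.det) :
    ∃ d : Fin n → k, (∀ i, d i ≠ 0) ∧ MCongruent (diagonal d) A := by
  obtain ⟨d, P, hP, hd⟩ := exists_diagonal_eq_transpose_mul_mul h2 hA
  have hne : (diagonal d).det ≠ 0 := by
    rw [hd, det_mul, det_mul, det_transpose]
    exact ((hP.mul hdet).mul hP).ne_zero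
  rw [det_diagonal, Finset.prod_ne_zero_iff] at hne
  exact ⟨d, fun i => hne i (Finset.mem_univ i), mCongruent_of_eq_transpose_mul_mul hP hd⟩

end Congruence

namespace GWTarget

theorem ebar_sq : ebar ^ 2 = 0 := by
  rw [ebar, ← map_pow, Ideal.Quotient.eq_zero_iff_mem]
  exact Ideal.subset_span (by simp)

theorem two_mul_ebar : 2 * ebar = 0 := by
  rw [ebar, ← map_ofNat (Ideal.Quotient.mk RepsInt) 2, ← map_mul, Ideal.Quotient.eq_zero_iff_mem]
  exact Ideal.subset_span (by simp)

theorem exists_eq_intCast_add_intCast_mul_ebar (x : GWTarget) :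
    ∃ a b : ℤ, x = a + b * ebar := by
  obtain ⟨p, rfl⟩ := Ideal.Quotient.mk_surjective x
  refine ⟨p.coeff 0, p.divX.coeff 0, ?_⟩
  have hp : p = p.divX.divX * X ^ 2 + C (p.divX.coeff 0) * X + C (p.coeff 0) := by
    linear_combination -p.divX_mul_X_add - X * p.divX.divX_mul_X_add
  have hmk := congrArg (Ideal.Quotient.mk RepsInt) hp
  simp only [map_add, map_mul, map_pow, eq_intCast, map_intCast] at hmk
  rw [← ebar] at hmk
  linear_combination hmk + Ideal.Quotient.mk RepsInt p.divX.divX * ebar_sq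

theorem exists_eq_intCast_or_eq_intCast_add_ebar (x : GWTarget) :
    ∃ a : ℤ, x = a ∨ x = a + ebar := by
  obtain ⟨a, b, rfl⟩ := exists_eq_intCast_add_intCast_mul_ebar x
  refine ⟨a, ?_⟩
  obtain ⟨q, rfl⟩ | ⟨q, rfl⟩ := b.even_or_odd
  · left
    push_cast
    linear_combination (q : GWTarget) * two_mul_ebar
  · right
    push_cast
    linear_combination (q : GWTarget) * two_mul_ebar

variable {R : Type*} [CommRing R] (u : R) (hsq : u ^ 2 = 0) (htwo : 2 * u = 0)

/-- The universal property of `ℤ[e]/(e², 2e)`: the ring homomorphism sending `e` to an element `u`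
with `u² = 2u = 0`. -/
noncomputable def lift : GWTarget →+* R :=
  Ideal.Quotient.lift RepsInt (eval₂RingHom (Int.castRingHom R) u) fun p hp => by
    have hle : RepsInt ≤ RingHom.ker (eval₂RingHom (Int.castRingHom R) u) := by
      rw [RepsInt, Ideal.span_le]
      rintro q (rfl | rfl)
      · simpa [RingHom.mem_ker] using hsq
      · simpa [RingHom.mem_ker, eval₂_ofNat] using htwo
    exact hle hp

theorem lift_ebar : lift u hsq htwo ebar = u := by
  exact eval₂_X (Int.castRingHom R) u

end GWTarget

/-- A multiplicative isometry invariant: a ring-valued function of Gram matrices that is constant on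
congruence classes, turns orthogonal sums into sums and tensor products into products, and sends the
unit form to `1`. It is defined on all square matrices, the degenerate ones included. -/
structure IsIsometryInvariant {k : Type*} [Field k] {G : Type*} [CommRing G]
    (c : ∀ {n : ℕ}, Matrix (Fin n) (Fin n) k → G) : Prop where
  eq_of_mCongruent : ∀ {n m : ℕ} (A : Matrix (Fin n) (Fin n) k) (B : Matrix (Fin m) (Fin m) k),
    MCongruent A B → c A = c B
  map_blockSum : ∀ {n m : ℕ} (A : Matrix (Fin n) (Fin n) k) (B : Matrix (Fin m) (Fin m) k),
    c (blockSum A B) = c A + c B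
  map_matKron : ∀ {n m : ℕ} (A : Matrix (Fin n) (Fin n) k) (B : Matrix (Fin m) (Fin m) k),
    c (matKron A B) = c A * c B
  map_one : c (1 : Matrix (Fin 1) (Fin 1) k) = 1

/-- The invariant `c` exhibits `G` as the Grothendieck–Witt ring of `k`: on nondegenerate symmetric
forms it is a group completion, that is, every element of `G` is a difference of classes, and forms
with the same class are stably isometric. -/
structure IsGrothendieckWitt {k : Type*} [Field k] {G : Type*} [CommRing G]
    (c : ∀ {n : ℕ}, Matrix (Fin n) (Fin n) k → G) : Prop extends IsIsometryInvariant c where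
  exists_eq_sub : ∀ g : G, ∃ (n m : ℕ) (A : Matrix (Fin n) (Fin n) k)
    (B : Matrix (Fin m) (Fin m) k),
    A.IsSymm ∧ IsUnit A.det ∧ B.IsSymm ∧ IsUnit B.det ∧ g = c A - c B
  exists_mCongruent_blockSum : ∀ {n m : ℕ} (A : Matrix (Fin n) (Fin n) k)
    (B : Matrix (Fin m) (Fin m) k),
    A.IsSymm → IsUnit A.det → B.IsSymm → IsUnit B.det → c A = c B →
    ∃ (l : ℕ) (D : Matrix (Fin l) (Fin l) k), D.IsSymm ∧ IsUnit D.det ∧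
      MCongruent (blockSum A D) (blockSum B D)

section Class

variable {k : Type*} [Field k] {G : Type*} [CommRing G]
  {c : ∀ {n : ℕ}, Matrix (Fin n) (Fin n) k → G}

namespace IsIsometryInvariant

theorem map_singleton_one (h : IsIsometryInvariant c) : c !![(1 : k)] = 1 := by
  rw [← h.map_one, ← diagonal_one, diagonal_fin_one]

theorem map_eq_zero_of_size_zero (h : IsIsometryInvariant c) (A : Matrix (Fin 0) (Fin 0) k) :
    c A = 0 := by
  have hself : blockSum A A = A := by
    ext i
    exact i.elim0
  rw [← add_eq_left, ← h.map_blockSum, hself]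

theorem map_diagonal (h : IsIsometryInvariant c) {n : ℕ} (d : Fin n → k) :
    c (diagonal d) = ∑ i, c !![d i] := by
  induction d using Fin.snocInduction with
  | elim0 => rw [h.map_eq_zero_of_size_zero, Fin.sum_univ_zero]
  | snoc d a ih =>
    have hlast : c (diagonal fun _ : Fin 1 => a) = c !![a] := by rw [diagonal_fin_one]
    have hsnoc : Fin.snoc d a = Fin.append d fun _ : Fin 1 => a :=
      (Fin.append_right_eq_snoc d fun _ => a).symm
    rw [hsnoc, ← blockSum_diagonal, h.map_blockSum, ih, Fin.sum_univ_add]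
    simp [hlast]

theorem map_singleton_eq_of_isSquare_mul (h : IsIsometryInvariant c) {a b : k} (ha : a ≠ 0)
    (hb : b ≠ 0) (hab : IsSquare (a * b)) : c !![a] = c !![b] :=
  h.eq_of_mCongruent _ _ (mCongruent_singleton_of_isSquare_mul ha hb hab)

theorem map_singleton_of_isSquare (h : IsIsometryInvariant c) {a : k} (ha : a ≠ 0)
    (hsq : IsSquare a) : c !![a] = 1 := by
  rw [h.map_singleton_eq_of_isSquare_mul ha one_ne_zero (by rwa [mul_one]), h.map_singleton_one]

theorem map_singleton_sq (h : IsIsometryInvariant c) {a : k} (ha : a ≠ 0) :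
    c !![a] ^ 2 = 1 := by
  rw [sq, ← h.map_matKron, matKron_singleton,
    h.map_singleton_of_isSquare (mul_ne_zero ha ha) (IsSquare.mul_self a)]

theorem two_mul_map_singleton_sq_add_sq (h : IsIsometryInvariant c) {a b : k}
    (hab : a ^ 2 + b ^ 2 ≠ 0) : 2 * c !![a ^ 2 + b ^ 2] = 2 := by
  have heq := h.eq_of_mCongruent _ _ (mCongruent_diagonal_sq_add_sq hab)
  simp only [h.map_diagonal, Fin.sum_univ_two, cons_val_zero, cons_val_one,
    h.map_singleton_one] at heq
  linear_combination heq

theorem map_singleton_mem_range (h : IsIsometryInvariant c) {r : k} (hr : r ≠ 0)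
    (hclass : ∀ s, ¬ IsSquare s → IsSquare (r * s)) {ψ : GWTarget →+* G}
    (hψ : ψ ebar = c !![r] - 1) {a : k} (ha : a ≠ 0) : c !![a] ∈ ψ.range := by
  by_cases hs : IsSquare a
  · rw [h.map_singleton_of_isSquare ha hs]
    exact one_mem _
  · rw [← h.map_singleton_eq_of_isSquare_mul hr ha (hclass a hs)]
    exact ⟨ebar + 1, by rw [map_add, hψ, _root_.map_one, sub_add_cancel]⟩

end IsIsometryInvariant

namespace IsGrothendieckWitt

theorem size_eq_and_isSquare_prod_mul_prod (h : IsGrothendieckWitt c) {n m : ℕ} {d : Fin n → k}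
    {d' : Fin m → k} (hd : ∀ i, d i ≠ 0) (hd' : ∀ i, d' i ≠ 0)
    (heq : ∑ i, c !![d i] = ∑ i, c !![d' i]) :
    n = m ∧ IsSquare ((∏ i, d i) * ∏ i, d' i) := by
  have hdet {p : ℕ} {f : Fin p → k} (hf : ∀ i, f i ≠ 0) : IsUnit (diagonal f).det := by
    rw [det_diagonal]
    exact IsUnit.mk0 _ (Finset.prod_ne_zero_iff.mpr fun i _ => hf i)
  obtain ⟨l, D, -, hD, hstable⟩ := h.exists_mCongruent_blockSum _ _ (isSymm_diagonal d) (hdet hd)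
    (isSymm_diagonal d') (hdet hd') (by rwa [h.map_diagonal, h.map_diagonal])
  refine ⟨hstable.size_eq_of_blockSum, ?_⟩
  simpa only [det_diagonal] using hstable.isSquare_det_mul_det_of_blockSum hD

theorem eq_and_isSquare_of_natCast_add_eq (h : IsGrothendieckWitt c) {p q : ℕ} {s : k} (hs : s ≠ 0)
    (heq : (p : G) + c !![s] = q + 1) : p = q ∧ IsSquare s := by
  have hd : ∀ i, (Fin.snoc (fun _ : Fin p => (1 : k)) s : Fin (p + 1) → k) i ≠ 0 :=
    Fin.lastCases (by simpa using hs) (by simp)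
  have hinv := h.size_eq_and_isSquare_prod_mul_prod (d' := fun _ : Fin (q + 1) => (1 : k)) hd
    (fun _ => one_ne_zero) (by simpa [Fin.sum_univ_castSucc, h.map_singleton_one] using heq)
  simpa [Fin.prod_univ_castSucc] using hinv

theorem injective_of_map_ebar (h : IsGrothendieckWitt c) {r : k} (hr : ¬ IsSquare r)
    {ψ : GWTarget →+* G} (hψ : ψ ebar = c !![r] - 1) : Function.Injective ψ := by
  rw [injective_iff_map_eq_zero]
  intro x hx
  obtain ⟨a, hxa⟩ := GWTarget.exists_eq_intCast_or_eq_intCast_add_ebar x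
  obtain ⟨p, q, rfl⟩ : ∃ p q : ℕ, a = p - q := ⟨_, _, a.toNat_sub_toNat_neg.symm⟩
  obtain rfl | rfl := hxa
  · have hpq : (p : G) + c !![(1 : k)] = q + 1 := by
      push_cast [map_sub, map_natCast] at hx
      linear_combination hx + h.map_singleton_one
    rw [(h.eq_and_isSquare_of_natCast_add_eq one_ne_zero hpq).1, sub_self, Int.cast_zero]
  · have hpq : (p : G) + c !![r] = q + 1 := by
      push_cast [map_add, map_sub, map_natCast, hψ] at hx
      linear_combination hx
    exact absurd (h.eq_and_isSquare_of_natCast_add_eq (ne_zero_of_not_isSquare hr) hpq).2 hr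

theorem surjective_of_map_ebar (h : IsGrothendieckWitt c) (h2 : (2 : k) ≠ 0) {r : k} (hr : r ≠ 0)
    (hclass : ∀ s, ¬ IsSquare s → IsSquare (r * s)) {ψ : GWTarget →+* G}
    (hψ : ψ ebar = c !![r] - 1) : Function.Surjective ψ := by
  have hform {n : ℕ} {A : Matrix (Fin n) (Fin n) k} (hA : A.IsSymm) (hdet : IsUnit A.det) :
      c A ∈ ψ.range := by
    obtain ⟨d, hd, hdA⟩ := exists_mCongruent_diagonal h2 hA hdet
    rw [← h.eq_of_mCongruent _ _ hdA, h.map_diagonal]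
    exact sum_mem fun i _ => h.map_singleton_mem_range hr hclass hψ (hd i)
  intro g
  obtain ⟨n, m, A, B, hA, hA', hB, hB', rfl⟩ := h.exists_eq_sub g
  exact sub_mem (hform hA hA') (hform hB hB')

end IsGrothendieckWitt

end Class

section FiniteField

variable {k : Type*} [Field k] [Finite k]

theorem exists_sq_add_sq_eq_of_finite (hchar : ringChar k ≠ 2) (r : k) :
    ∃ a b : k, a ^ 2 + b ^ 2 = r := by
  have := Fintype.ofFinite k
  obtain ⟨a, b, hab⟩ := FiniteField.exists_root_sum_quadratic (f := (X ^ 2 : k[X]))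
    (g := X ^ 2 - C r) (degree_X_pow 2) (degree_X_pow_sub_C (by decide) _)
    (FiniteField.odd_card_of_char_ne_two hchar)
  refine ⟨a, b, ?_⟩
  rw [← sub_eq_zero]
  simpa only [eval_C, eval_X, eval_pow, eval_sub, ← add_sub_assoc] using hab

theorem isSquare_mul_of_not_isSquare {r s : k} (hr : ¬ IsSquare r) (hs : ¬ IsSquare s) :
    IsSquare (r * s) := by
  classical
  have := Fintype.ofFinite k
  rw [← quadraticChar_one_iff_isSquare
      (mul_ne_zero (ne_zero_of_not_isSquare hr) (ne_zero_of_not_isSquare hs)), map_mul,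
    quadraticChar_neg_one_iff_not_isSquare.mpr hr, quadraticChar_neg_one_iff_not_isSquare.mpr hs,
    neg_one_mul, neg_neg]

end FiniteField

theorem stmt0_general {k : Type*} [Field k] (h2 : (2 : k) ≠ 0) {r : k} (hr : ¬ IsSquare r)
    (hclass : ∀ s, ¬ IsSquare s → IsSquare (r * s)) (hsum : ∃ a b : k, a ^ 2 + b ^ 2 = r)
    {G : Type*} [CommRing G] {c : ∀ {n : ℕ}, Matrix (Fin n) (Fin n) k → G}
    (h : IsGrothendieckWitt c) :
    ∃ φ : G ≃+* GWTarget, ∀ s : k, ¬ IsSquare s → φ (c !![s] - c !![(1 : k)]) = ebar := by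
  have hr0 : r ≠ 0 := ne_zero_of_not_isSquare hr
  have htwo : 2 * (c !![r] - 1) = 0 := by
    obtain ⟨a, b, rfl⟩ := hsum
    linear_combination h.two_mul_map_singleton_sq_add_sq hr0
  have hsq : (c !![r] - 1) ^ 2 = 0 := by
    linear_combination h.map_singleton_sq hr0 - htwo
  let ψ : GWTarget →+* G := GWTarget.lift (c !![r] - 1) hsq htwo
  have hψ : ψ ebar = c !![r] - 1 := GWTarget.lift_ebar _ hsq htwo
  let φ : GWTarget ≃+* G := RingEquiv.ofBijective ψ
    ⟨h.injective_of_map_ebar hr hψ, h.surjective_of_map_ebar h2 hr0 hclass hψ⟩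
  refine ⟨φ.symm, fun s hs => ?_⟩
  have hrs : c !![r] = c !![s] :=
    h.map_singleton_eq_of_isSquare_mul hr0 (ne_zero_of_not_isSquare hs) (hclass s hs)
  rw [RingEquiv.symm_apply_eq, ← hrs, h.map_singleton_one]
  exact hψ.symm

/-- Let `k` be a finite field of odd characteristic.  The Grothendieck–Witt ring of `k`
— i.e. any commutative ring `G` receiving the isometry classes of nondegenerate
symmetric bilinear forms (Gram matrices) over `k`, additively via orthogonal sum and
multiplicatively via tensor product, which is the group completion of the monoid of
isometry classes (every element is a difference of classes, and classes become equal in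
`G` only when stably isometric) — is isomorphic as a ring to `ℤ[e]/(e², 2e)`, via an
isomorphism sending `[r] − [1]` to `e` for `r` a non-square in `kˣ`. -/
theorem stmt0 {k : Type*} [Field k] [Fintype k] (hchar : ringChar k ≠ 2)
    (G : Type*) [CommRing G]
    (c : ∀ {n : ℕ}, Matrix (Fin n) (Fin n) k → G)
    (hcong : ∀ {n m : ℕ} (A : Matrix (Fin n) (Fin n) k) (B : Matrix (Fin m) (Fin m) k),
      MCongruent A B → c A = c B)
    (hadd : ∀ {n m : ℕ} (A : Matrix (Fin n) (Fin n) k) (B : Matrix (Fin m) (Fin m) k),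
      c (blockSum A B) = c A + c B)
    (hmul : ∀ {n m : ℕ} (A : Matrix (Fin n) (Fin n) k) (B : Matrix (Fin m) (Fin m) k),
      c (matKron A B) = c A * c B)
    (hone : c (1 : Matrix (Fin 1) (Fin 1) k) = 1)
    (hsurj : ∀ g : G, ∃ (n m : ℕ) (A : Matrix (Fin n) (Fin n) k)
      (B : Matrix (Fin m) (Fin m) k),
      A.IsSymm ∧ IsUnit A.det ∧ B.IsSymm ∧ IsUnit B.det ∧ g = c A - c B)
    (hfaith : ∀ {n m : ℕ} (A : Matrix (Fin n) (Fin n) k) (B : Matrix (Fin m) (Fin m) k),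
      A.IsSymm → IsUnit A.det → B.IsSymm → IsUnit B.det → c A = c B →
      ∃ (l : ℕ) (D : Matrix (Fin l) (Fin l) k), D.IsSymm ∧ IsUnit D.det ∧
        MCongruent (blockSum A D) (blockSum B D)) :
    ∃ φ : G ≃+* GWTarget,
      ∀ r : k, ¬ IsSquare r → φ (c !![r] - c !![(1 : k)]) = ebar := by
  obtain ⟨r, hr⟩ := FiniteField.exists_nonsquare hchar
  exact stmt0_general (Ring.two_ne_zero hchar) hr (fun _ => isSquare_mul_of_not_isSquare hr)
    (exists_sq_add_sq_eq_of_finite hchar r) ⟨⟨hcong, hadd, hmul, hone⟩, hsurj, hfaith⟩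
end

section
/- Over a finite field k of odd characteristic, every nondegenerate symmetric bilinear form is determined up to isometry by its rank and its determinant class in k×/(k×)². Equivalently, two nondegenerate diagonal forms of the same rank are isometric iff their determinants agree modulo squares. -/
open Matrix

/-!
Over any field of characteristic not two the forms can be diagonalized. The classification then
rests on binary forms: if `⟨a, b⟩` represents `c ≠ 0` by a vector `v`, the orthogonal complement
of `v` is forced to have value `ab / c` up to squares, so `⟨a, b⟩ ≅ ⟨c, ab / c⟩`. When binary forms
represent everything, as the pigeonhole principle shows over a finite field, these exchanges
adjust the diagonal entries of one form to those of the other one at a time; only the last entry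
cannot be chosen, and it is determined up to a square by the determinant.
-/

open Function (update)

section

variable {ι κ R k : Type*} [Fintype ι] [DecidableEq ι] [Fintype κ] [DecidableEq κ]
  [CommRing R] [Field k]

/-- Congruence of square matrices: `A` and `B` are Gram matrices of isometric bilinear forms. -/
def IsCongruent (A B : Matrix ι ι R) : Prop :=
  ∃ P : Matrix ι ι R, IsUnit P.det ∧ A = Pᵀ * B * P

namespace IsCongruent

@[refl]
theorem refl (A : Matrix ι ι R) : IsCongruent A A :=
  ⟨1, by simp, by simp⟩

@[symm]
theorem symm {A B : Matrix ι ι R} : IsCongruent A B → IsCongruent B A := by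
  rintro ⟨P, hP, rfl⟩
  have hPt : IsUnit Pᵀ.det := by rwa [det_transpose]
  refine ⟨P⁻¹, isUnit_nonsing_inv_det P hP, ?_⟩
  rw [transpose_nonsing_inv, Matrix.mul_assoc, mul_nonsing_inv_cancel_right _ _ hP,
    nonsing_inv_mul_cancel_left _ _ hPt]

@[trans]
theorem trans {A B C : Matrix ι ι R} : IsCongruent A B → IsCongruent B C → IsCongruent A C := by
  rintro ⟨P, hP, rfl⟩ ⟨Q, hQ, rfl⟩
  exact ⟨Q * P, by simpa only [det_mul] using hQ.mul hP,
    by simp only [transpose_mul, Matrix.mul_assoc]⟩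

theorem exists_det_eq_sq_mul {A B : Matrix ι ι R} (h : IsCongruent A B) :
    ∃ u : R, IsUnit u ∧ A.det = u ^ 2 * B.det := by
  obtain ⟨P, hP, rfl⟩ := h
  exact ⟨P.det, hP, by rw [det_mul, det_mul, det_transpose]; ring⟩

theorem submatrix {A B : Matrix ι ι R} (h : IsCongruent A B) (e : κ ≃ ι) :
    IsCongruent (A.submatrix e e) (B.submatrix e e) := by
  obtain ⟨P, hP, rfl⟩ := h
  refine ⟨P.submatrix e e, by rwa [det_submatrix_equiv_self], ?_⟩
  rw [transpose_submatrix, submatrix_mul_equiv, submatrix_mul_equiv]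

theorem fromBlocks {A A' : Matrix ι ι R} {B B' : Matrix κ κ R} (hA : IsCongruent A A')
    (hB : IsCongruent B B') :
    IsCongruent (Matrix.fromBlocks A 0 0 B) (Matrix.fromBlocks A' 0 0 B') := by
  obtain ⟨P, hP, rfl⟩ := hA
  obtain ⟨Q, hQ, rfl⟩ := hB
  refine ⟨Matrix.fromBlocks P 0 0 Q, by simpa only [det_fromBlocks_zero₁₂] using hP.mul hQ, ?_⟩
  simp [fromBlocks_transpose, fromBlocks_multiply]

theorem diagonal_sq_mul {c : ι → R} (hc : ∀ i, IsUnit (c i)) (w : ι → R) :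
    IsCongruent (diagonal fun i => c i ^ 2 * w i) (diagonal w) := by
  refine ⟨diagonal c, ?_, ?_⟩
  · rw [det_diagonal]
    exact IsUnit.prod_univ_iff.mpr hc
  · rw [diagonal_transpose, diagonal_mul_diagonal, diagonal_mul_diagonal]
    congr 1
    ext i
    ring

theorem diagonal_of_comp_injective {f : κ → ι} (hf : f.Injective) {w w' : ι → R}
    (heq : ∀ i ∉ Set.range f, w i = w' i)
    (h : IsCongruent (diagonal (w ∘ f)) (diagonal (w' ∘ f))) :
    IsCongruent (diagonal w) (diagonal w') := by
  classical
  let e : κ ⊕ ((Set.range f)ᶜ : Set ι) ≃ ι :=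
    ((Equiv.ofInjective f hf).sumCongr (Equiv.refl _)).trans (Equiv.Set.sumCompl _)
  let d : ((Set.range f)ᶜ : Set ι) → R := fun i => w i
  have diagonal_eq (v : ι → R) (hv : ∀ i ∉ Set.range f, w i = v i) :
      diagonal v =
        (Matrix.fromBlocks (diagonal (v ∘ f)) 0 0 (diagonal d)).submatrix e.symm e.symm := by
    rw [fromBlocks_diagonal, submatrix_diagonal_equiv]
    congr 1
    rw [Equiv.eq_comp_symm]
    ext (x | x)
    · simp [e]
    · simp [e, d, hv x x.2]
  rw [diagonal_eq w fun _ _ => rfl, diagonal_eq w' heq]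
  exact (h.fromBlocks (refl _)).submatrix e.symm

theorem diagonal_of_eq_sq_mul {w w' : ι → R} {i : ι} {u : R} (hu : IsUnit u)
    (hi : w i = u ^ 2 * w' i) (heq : ∀ l ≠ i, w l = w' l) :
    IsCongruent (diagonal w) (diagonal w') := by
  refine diagonal_of_comp_injective (f := fun _ : Unit => i) (fun _ _ _ => rfl)
    (fun l hl => heq l (by simpa [eq_comm] using hl)) ?_
  have hwi : w ∘ (fun _ : Unit => i) = fun _ => u ^ 2 * w' i := funext fun _ => hi
  rw [hwi]
  exact diagonal_sq_mul (fun _ => hu) _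

theorem toMatrix_toMatrix {M : Type*} [AddCommGroup M] [Module R M]
    (B : LinearMap.BilinForm R M) (b c : Module.Basis ι R M) :
    IsCongruent (LinearMap.BilinForm.toMatrix b B) (LinearMap.BilinForm.toMatrix c B) := by
  have := c.invertibleToMatrix b
  exact ⟨c.toMatrix b, isUnit_det_of_invertible _,
    (LinearMap.BilinForm.toMatrix_mul_basis_toMatrix c b B).symm⟩

end IsCongruent

open IsCongruent

theorem exists_isCongruent_diagonal (hchar : ringChar k ≠ 2) {A : Matrix ι ι k}
    (hA : A.IsSymm) : ∃ w : ι → k, IsCongruent A (diagonal w) := by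
  have := invertibleOfNonzero (Ring.two_ne_zero hchar)
  obtain ⟨v, hv⟩ := LinearMap.BilinForm.exists_orthogonal_basis (B := toBilin' A)
    (LinearMap.BilinForm.isSymm_iff.mp (isSymm_toBilin'_iff_isSymm.mpr hA))
  let b := v.reindex (Fintype.equivFinOfCardEq (Module.finrank_fintype_fun_eq_card k).symm).symm
  have hb : LinearMap.BilinForm.toMatrix b (toBilin' A) =
      diagonal fun i => toBilin' A (b i) (b i) := by
    ext i j
    rw [LinearMap.BilinForm.toMatrix_apply, diagonal_apply]
    split_ifs with hij
    · rw [hij]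
    · simp only [b, Module.Basis.reindex_apply]
      exact hv ((Equiv.injective _).ne hij)
  have hAb := toMatrix_toMatrix (toBilin' A) (Pi.basisFun k ι) b
  rw [LinearMap.BilinForm.toMatrix_basisFun, LinearMap.BilinForm.toMatrix'_toBilin', hb] at hAb
  exact ⟨_, hAb⟩

theorem isCongruent_diagonal_fin_two {a b c d x y : k} (hc : c ≠ 0)
    (hxy : a * x ^ 2 + b * y ^ 2 = c) (habcd : a * b = c * d) :
    IsCongruent (diagonal ![c, d]) (diagonal ![a, b]) := by
  have hd : d = a * b / c := by rw [habcd, mul_div_cancel_left₀ d hc]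
  -- The columns are the given vector of value `c` and the vector orthogonal to it, scaled so that
  -- the determinant is one.
  refine ⟨!![x, -(b * y) / c; y, a * x / c], ?_, ?_⟩
  · have hdet : x * (a * x / c) - -(b * y) / c * y = 1 := by
      field_simp
      linear_combination hxy
    rw [det_fin_two_of, hdet]
    exact isUnit_one
  · have transpose_eq (p q r s : k) : !![p, q; r, s]ᵀ = !![p, r; q, s] := eta_fin_two _
    rw [diagonal_vec2, diagonal_vec2, transpose_eq, mul_fin_two, mul_fin_two, hd]
    congrm !![?_, ?_; ?_, ?_]
    · linear_combination -hxy
    · ring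
    · ring
    · field_simp
      linear_combination -a * b * hxy

/-- Every nondegenerate binary diagonal form over `k` represents every scalar; in characteristic
not two this says that the `u`-invariant of `k` is at most two. -/
def BinaryFormsUniversal (k : Type*) [Field k] : Prop :=
  ∀ ⦃a b : k⦄, a ≠ 0 → b ≠ 0 → ∀ c, ∃ x y, a * x ^ 2 + b * y ^ 2 = c

open Polynomial in
theorem binaryFormsUniversal_of_finite [Finite k] (hchar : ringChar k ≠ 2) :
    BinaryFormsUniversal k := by
  have := Fintype.ofFinite k
  intro a b ha hb c
  obtain ⟨x, y, hxy⟩ := FiniteField.exists_root_sum_quadratic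
    (f := C a * X ^ 2) (g := C b * X ^ 2 + C 0 * X + C (-c))
    (degree_C_mul_X_pow 2 ha) (degree_quadratic hb) (FiniteField.odd_card_of_char_ne_two hchar)
  simp only [eval_add, eval_mul, eval_C, eval_pow, eval_X] at hxy
  exact ⟨x, y, by linear_combination hxy⟩

namespace BinaryFormsUniversal

theorem isCongruent_diagonal_update_update (hk : BinaryFormsUniversal k) {w : ι → k} {i j : ι}
    (hij : i ≠ j) (hi : w i ≠ 0) (hj : w j ≠ 0) {c d : k} (hc : c ≠ 0)
    (hcd : w i * w j = c * d) :
    IsCongruent (diagonal w) (diagonal (update (update w i c) j d)) := by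
  obtain ⟨x, y, hxy⟩ := hk hi hj c
  have hinj : Function.Injective ![i, j] := by
    simpa [Function.Injective, Fin.forall_fin_two, eq_comm] using hij
  refine diagonal_of_comp_injective hinj (fun l hl => ?_) ?_
  · have hl' : l ≠ i ∧ l ≠ j := by simpa [eq_comm, and_comm] using hl
    rw [Function.update_of_ne hl'.2, Function.update_of_ne hl'.1]
  · have hw : w ∘ ![i, j] = ![w i, w j] := by
      ext l
      fin_cases l <;> simp
    have hw' : update (update w i c) j d ∘ ![i, j] = ![c, d] := by
      ext l
      fin_cases l <;> simp [hij]
    rw [hw, hw']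
    exact (isCongruent_diagonal_fin_two hc hxy hcd).symm

theorem exists_isCongruent_diagonal_exchange (hk : BinaryFormsUniversal k) {s : Finset ι}
    {i : ι} (his : i ∉ s) (hs : s.Nonempty) {w : ι → k} (hw : w i * ∏ l ∈ s, w l ≠ 0) {c : k}
    (hc : c ≠ 0) :
    ∃ v : ι → k, IsCongruent (diagonal w) (diagonal v) ∧ v i = c ∧
      (∀ l ∉ insert i s, v l = w l) ∧ c * ∏ l ∈ s, v l = w i * ∏ l ∈ s, w l := by
  obtain ⟨j, hj⟩ := hs
  have hij : i ≠ j := fun h => his (h ▸ hj)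
  have hi : w i ≠ 0 := left_ne_zero_of_mul hw
  have hj' : w j ≠ 0 := Finset.prod_ne_zero_iff.mp (right_ne_zero_of_mul hw) j hj
  have hcd : w i * w j = c * (w i * w j / c) := (mul_div_cancel₀ _ hc).symm
  refine ⟨update (update w i c) j (w i * w j / c),
    hk.isCongruent_diagonal_update_update hij hi hj' hc hcd, by simp [hij], fun l hl => ?_, ?_⟩
  · have hli : l ≠ i := fun h => hl (h ▸ Finset.mem_insert_self i s)
    have hlj : l ≠ j := fun h => hl (h ▸ Finset.mem_insert_of_mem hj)
    rw [Function.update_of_ne hlj, Function.update_of_ne hli]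
  · rw [Finset.prod_update_of_mem hj, Finset.prod_update_of_notMem (by simp [his]),
      Finset.prod_eq_mul_prod_sdiff_singleton_of_mem hj w, ← mul_assoc, ← hcd, mul_assoc]

theorem isCongruent_diagonal_of_prod_eq_sq_mul (hk : BinaryFormsUniversal k) {s : Finset ι}
    {w w' : ι → k} {u : k} (heq : ∀ i ∉ s, w i = w' i) (hw : ∏ i ∈ s, w i ≠ 0)
    (hprod : ∏ i ∈ s, w i = u ^ 2 * ∏ i ∈ s, w' i) :
    IsCongruent (diagonal w) (diagonal w') := by
  induction s using Finset.induction_on generalizing w with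
  | empty => rw [funext fun i => heq i (Finset.notMem_empty i)]
  | insert i s his ih =>
    rw [Finset.prod_insert his] at hw
    rw [Finset.prod_insert his, Finset.prod_insert his] at hprod
    have hwi' : w' i ≠ 0 := left_ne_zero_of_mul (right_ne_zero_of_mul (hprod ▸ hw))
    rcases s.eq_empty_or_nonempty with rfl | hs
    · have hu : u ≠ 0 := (pow_ne_zero_iff two_ne_zero).mp (left_ne_zero_of_mul (hprod ▸ hw))
      exact diagonal_of_eq_sq_mul hu.isUnit (by simpa using hprod) (by simpa using heq)
    · obtain ⟨v, hwv, hvi, hv, hv_prod⟩ := hk.exists_isCongruent_diagonal_exchange his hs hw hwi'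
      refine hwv.trans (ih (fun l hl => ?_) (right_ne_zero_of_mul (hv_prod ▸ hw)) ?_)
      · rcases eq_or_ne l i with rfl | hli
        · exact hvi
        · have hl' : l ∉ insert i s := by simp [hli, hl]
          rw [hv l hl', heq l hl']
      · apply mul_left_cancel₀ hwi'
        rw [hv_prod, hprod, mul_left_comm]

end BinaryFormsUniversal

theorem stmt2_general (hchar : ringChar k ≠ 2) (hk : BinaryFormsUniversal k) {A B : Matrix ι ι k}
    (hA : A.IsSymm) (hB : B.IsSymm) (hAd : IsUnit A.det) :
    IsCongruent A B ↔ ∃ u : k, A.det = u ^ 2 * B.det := by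
  refine ⟨fun h => h.exists_det_eq_sq_mul.imp fun _ => And.right, ?_⟩
  rintro ⟨u, hu⟩
  obtain ⟨w, hAw⟩ := exists_isCongruent_diagonal hchar hA
  obtain ⟨v, hBv⟩ := exists_isCongruent_diagonal hchar hB
  obtain ⟨p, hp, hwp⟩ := hAw.symm.exists_det_eq_sq_mul
  obtain ⟨q, -, hvq⟩ := hBv.exists_det_eq_sq_mul
  rw [det_diagonal] at hwp hvq
  have hw : ∏ i, w i ≠ 0 := by
    rw [hwp]
    exact mul_ne_zero (pow_ne_zero 2 hp.ne_zero) hAd.ne_zero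
  have hwv : ∏ i, w i = (p * u * q) ^ 2 * ∏ i, v i := by
    rw [hwp, hu, hvq]
    ring
  exact hAw.trans <|
    (hk.isCongruent_diagonal_of_prod_eq_sq_mul (by simp) hw hwv).trans hBv.symm

end

/-- Over a finite field `k` of odd characteristic, a nondegenerate symmetric bilinear
form is determined up to isometry by its rank and its determinant in `kˣ/(kˣ)²`:
two nondegenerate symmetric forms of the same rank (given by Gram matrices `A`, `B`)
are isometric (congruent) iff their determinants agree modulo squares. -/
theorem stmt2 (k : Type*) [Field k] [Fintype k] (hchar : ringChar k ≠ 2) (n : ℕ)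
    (A B : Matrix (Fin n) (Fin n) k) (hA : A.IsSymm) (hB : B.IsSymm)
    (hAd : IsUnit A.det) (hBd : IsUnit B.det) :
    (∃ P : Matrix (Fin n) (Fin n) k, IsUnit P.det ∧ A = Pᵀ * B * P) ↔
      ∃ u : k, A.det = u ^ 2 * B.det :=
  stmt2_general hchar (binaryFormsUniversal_of_finite hchar) hA hB hAd
end
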